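/- The short exact sequence 1 → SU(2) → SU(2) × (SU(2) × SU(2)) → SU(2) × SU(2) → 1 (with the projection onto the last two factors) has exactly three conjugacy classes of splittings, represented by τ(x,y) = (1,x,y), ω₊(x,y) = (x,x,y), and ω₋(x,y) = (y,x,y). -/

import Mathlib

/-- The special unitary group `SU(2)`, as the kernel of the determinant on the
unitary group of `2 × 2` complex matrices. -/
noncomputable def SU2 : Subgroup (Matrix.unitaryGroup (Fin 2) ℂ) :=
  MonoidHom.ker (Matrix.detMonoidHom.comp (Matrix.unitaryGroup (Fin 2) ℂ).subtype)

/-- The projection `SU(2) × (SU(2) × SU(2)) → SU(2) × SU(2)` onto the last two factors. -/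
noncomputable def suProj : (SU2 × SU2 × SU2) →* (SU2 × SU2) :=
  MonoidHom.snd SU2 (SU2 × SU2)

/-- The trivial splitting `τ(x,y) = (1,x,y)`. -/
noncomputable def suTau : (SU2 × SU2) →* (SU2 × SU2 × SU2) :=
  MonoidHom.prod 1 (MonoidHom.id _)

/-- The splitting `ω₊(x,y) = (x,x,y)`. -/
noncomputable def suOmegaPlus : (SU2 × SU2) →* (SU2 × SU2 × SU2) :=
  MonoidHom.prod (MonoidHom.fst _ _) (MonoidHom.id _)

/-- The splitting `ω₋(x,y) = (y,x,y)`. -/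
noncomputable def suOmegaMinus : (SU2 × SU2) →* (SU2 × SU2 × SU2) :=
  MonoidHom.prod (MonoidHom.snd _ _) (MonoidHom.id _)

/-- Two splittings are conjugate iff they differ by conjugation by an element of the
kernel `SU(2)` (embedded as the first factor). -/
def suConj (σ₁ σ₂ : (SU2 × SU2) →* (SU2 × SU2 × SU2)) : Prop :=
  ∃ n : SU2, ∀ q : SU2 × SU2,
    σ₂ q = ((n, 1, 1) : SU2 × SU2 × SU2) * σ₁ q * ((n, 1, 1) : SU2 × SU2 × SU2)⁻¹

def q0 (x : SU2) : ℝ := (x.1.1 0 0).re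
def q1 (x : SU2) : ℝ := (x.1.1 0 0).im
def q2 (x : SU2) : ℝ := (x.1.1 1 0).re
def q3 (x : SU2) : ℝ := (x.1.1 1 0).im

lemma su_det (x : SU2) : x.1.1.det = 1 := x.2

lemma su_star (x : SU2) : star x.1.1 = x.1.1.adjugate := by
  have h1 : star x.1.1 * x.1.1 = 1 := Unitary.star_mul_self_of_mem x.1.2
  have h2 : x.1.1 * x.1.1.adjugate = 1 := by
    rw [Matrix.mul_adjugate, su_det, one_smul]
  calc star x.1.1 = star x.1.1 * (x.1.1 * x.1.1.adjugate) := by rw [h2, mul_one]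
    _ = _ := by rw [← mul_assoc, h1, one_mul]

lemma su_11 (x : SU2) : x.1.1 1 1 = star (x.1.1 0 0) := by
  have h := congrFun (congrFun (su_star x) 0) 0
  rw [Matrix.adjugate_fin_two] at h
  simpa [Matrix.star_apply] using h.symm

lemma su_01 (x : SU2) : x.1.1 0 1 = - star (x.1.1 1 0) := by
  have h := congrFun (congrFun (su_star x) 0) 1
  rw [Matrix.adjugate_fin_two] at h
  have h' : star (x.1.1 1 0) = - x.1.1 0 1 := by simpa [Matrix.star_apply] using h
  rw [h', neg_neg]

lemma su_ext {x y : SU2} (h0 : q0 x = q0 y) (h1 : q1 x = q1 y) (h2 : q2 x = q2 y)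
    (h3 : q3 x = q3 y) : x = y := by
  have e0 : x.1.1 0 0 = y.1.1 0 0 := Complex.ext h0 h1
  have e1 : x.1.1 1 0 = y.1.1 1 0 := Complex.ext h2 h3
  apply Subtype.ext
  apply Subtype.ext
  ext i j
  fin_cases i <;> fin_cases j
  · exact e0
  · change x.1.1 0 1 = y.1.1 0 1
    rw [su_01, su_01, e1]
  · exact e1
  · change x.1.1 1 1 = y.1.1 1 1
    rw [su_11, su_11, e0]

lemma su_mul_coe (x y : SU2) : (x * y).1.1 = x.1.1 * y.1.1 := rfl

lemma q0_mul (x y : SU2) : q0 (x * y) = q0 x * q0 y - q1 x * q1 y - q2 x * q2 y - q3 x * q3 y := by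
  simp only [q0, q1, q2, q3, su_mul_coe, Matrix.mul_apply, Fin.sum_univ_two, su_01]
  simp
  ring
lemma q1_mul (x y : SU2) : q1 (x * y) = q0 x * q1 y + q1 x * q0 y - q2 x * q3 y + q3 x * q2 y := by
  simp only [q0, q1, q2, q3, su_mul_coe, Matrix.mul_apply, Fin.sum_univ_two, su_01]
  simp
  ring
lemma q2_mul (x y : SU2) : q2 (x * y) = q2 x * q0 y - q3 x * q1 y + q0 x * q2 y + q1 x * q3 y := by
  simp only [q0, q1, q2, q3, su_mul_coe, Matrix.mul_apply, Fin.sum_univ_two, su_11]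
  simp
  ring
lemma q3_mul (x y : SU2) : q3 (x * y) = q2 x * q1 y + q3 x * q0 y + q0 x * q3 y - q1 x * q2 y := by
  simp only [q0, q1, q2, q3, su_mul_coe, Matrix.mul_apply, Fin.sum_univ_two, su_11]
  simp
  ring

lemma su_inv_coe (x : SU2) : (x⁻¹).1.1 = star x.1.1 := rfl

lemma q0_inv (x : SU2) : q0 x⁻¹ = q0 x := by
  simp [q0, su_inv_coe, Matrix.star_apply]
lemma q1_inv (x : SU2) : q1 x⁻¹ = - q1 x := by
  simp [q1, su_inv_coe, Matrix.star_apply]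
lemma q2_inv (x : SU2) : q2 x⁻¹ = - q2 x := by
  simp [q2, su_inv_coe, Matrix.star_apply, su_01]
lemma q3_inv (x : SU2) : q3 x⁻¹ = - q3 x := by
  simp [q3, su_inv_coe, Matrix.star_apply, su_01]
lemma q0_one : q0 1 = 1 := by simp [q0]
lemma q1_one : q1 1 = 0 := by simp [q1]
lemma q2_one : q2 1 = 0 := by simp [q2]
lemma q3_one : q3 1 = 0 := by simp [q3]

lemma q_sq (x : SU2) : q0 x ^ 2 + q1 x ^ 2 + q2 x ^ 2 + q3 x ^ 2 = 1 := by
  have h := q0_mul x x⁻¹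
  rw [mul_inv_cancel, q0_one, q0_inv, q1_inv, q2_inv, q3_inv] at h
  linarith

lemma su_exists (a b c d : ℝ) (h : a ^ 2 + b ^ 2 + c ^ 2 + d ^ 2 = 1) :
    ∃ x : SU2, q0 x = a ∧ q1 x = b ∧ q2 x = c ∧ q3 x = d := by
  let M : Matrix (Fin 2) (Fin 2) ℂ := !![⟨a, b⟩, ⟨-c, d⟩; ⟨c, d⟩, ⟨a, -b⟩]
  have hM : M ∈ Matrix.unitaryGroup (Fin 2) ℂ := by
    rw [Matrix.mem_unitaryGroup_iff]
    ext i j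
    fin_cases i <;> fin_cases j <;>
      simp [M, Matrix.mul_apply, Fin.sum_univ_two, Matrix.star_apply, Complex.ext_iff] <;>
      (constructor <;> nlinarith)
  have hd : M.det = 1 := by
    simp [M, Matrix.det_fin_two, Complex.ext_iff]
    constructor <;> nlinarith
  exact ⟨⟨⟨M, hM⟩, hd⟩, by simp [q0, M], by simp [q1, M], by simp [q2, M], by simp [q3, M]⟩

lemma su_scaled (a b c d : ℝ) (h : 0 < a ^ 2 + b ^ 2 + c ^ 2 + d ^ 2) :
    ∃ (s : ℝ) (x : SU2), q0 x = s * a ∧ q1 x = s * b ∧ q2 x = s * c ∧ q3 x = s * d := by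
  refine ⟨(√(a ^ 2 + b ^ 2 + c ^ 2 + d ^ 2))⁻¹, su_exists _ _ _ _ ?_⟩
  have := Real.sq_sqrt h.le
  have h' := Real.sqrt_pos.2 h
  field_simp
  linarith

lemma su_conj {x y : SU2} (h : q0 x = q0 y) : ∃ n : SU2, y = n * x * n⁻¹ := by
  suffices H : ∃ n : SU2, n * x = y * n by
    obtain ⟨n, hn⟩ := H
    exact ⟨n, by rw [hn]; group⟩
  have hx := q_sq x
  have hy := q_sq y
  rw [h] at hx
  have key : ∀ b c d : ℝ, 0 < b ^ 2 + c ^ 2 + d ^ 2 →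
      b * q1 x + c * q2 x + d * q3 x = b * q1 y + c * q2 y + d * q3 y →
      b * (q2 x + q2 y) = c * (q1 x + q1 y) →
      b * (q3 x + q3 y) = d * (q1 x + q1 y) →
      c * (q3 x + q3 y) = d * (q2 x + q2 y) → ∃ n : SU2, n * x = y * n := by
    intro b c d hp e1 e2 e3 e4
    obtain ⟨s, n, h0, h1, h2, h3⟩ := su_scaled 0 b c d (by linarith)
    refine ⟨n, su_ext ?_ ?_ ?_ ?_⟩ <;>
      simp only [q0_mul, q1_mul, q2_mul, q3_mul, h0, h1, h2, h3, h]
    · linear_combination -s * e1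
    · linear_combination -s * e4
    · linear_combination s * e3
    · linear_combination -s * e2
  by_cases hs : 0 < (q1 x + q1 y) ^ 2 + (q2 x + q2 y) ^ 2 + (q3 x + q3 y) ^ 2
  · exact key _ _ _ hs (by linarith) (by ring) (by ring) (by ring)
  · have a1 : q1 y = - q1 x := by nlinarith [sq_nonneg (q1 x + q1 y), sq_nonneg (q2 x + q2 y), sq_nonneg (q3 x + q3 y)]
    have a2 : q2 y = - q2 x := by nlinarith [sq_nonneg (q1 x + q1 y), sq_nonneg (q2 x + q2 y), sq_nonneg (q3 x + q3 y)]
    have a3 : q3 y = - q3 x := by nlinarith [sq_nonneg (q1 x + q1 y), sq_nonneg (q2 x + q2 y), sq_nonneg (q3 x + q3 y)]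
    by_cases h12 : 0 < (q1 x) ^ 2 + (q2 x) ^ 2
    · refine key (- q2 x) (q1 x) 0 (by linarith) ?_ ?_ ?_ ?_ <;> simp only [a1, a2, a3] <;> ring
    · have b1 : q1 x = 0 := by nlinarith [sq_nonneg (q1 x), sq_nonneg (q2 x)]
      refine key 1 0 0 (by norm_num) ?_ ?_ ?_ ?_ <;> simp only [a1, a2, a3, b1] <;> ring

lemma jensen_lin (F : ℝ → ℝ) (hb : ∀ t, 0 ≤ t → t ≤ 1 → |F t| ≤ 1)
    (h0 : F 0 = 0) (h1 : F 1 = 1)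
    (hJ : ∀ p q, 0 ≤ p → p + |q| ≤ 1 → F (p + q) + F (p - q) = 2 * F p) :
    ∀ t, |t| ≤ 1 → F t = t := by
  have hD : ∀ n : ℕ, ∀ t, 0 ≤ t → t ≤ 1 → |F t - t| ≤ 2 * (1 / 2) ^ n := by
    intro n
    induction n with
    | zero =>
      intro t h0 h1
      have := abs_le.1 (hb t h0 h1)
      rw [abs_le]
      constructor <;> norm_num <;> linarith
    | succ n ih =>
      have half : ∀ t, 0 ≤ t → t ≤ 1 / 2 → |F t - t| ≤ 2 * (1 / 2) ^ (n + 1) := by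
        intro t ht0 ht1
        have e := hJ t t ht0 (by rw [abs_of_nonneg ht0]; linarith)
        rw [sub_self, h0] at e
        have := abs_le.1 (ih (t + t) (by linarith) (by linarith))
        rw [abs_le, pow_succ]
        constructor <;> linarith
      intro t ht0 ht1
      rcases le_total t (1 / 2) with h | h
      · exact half t ht0 h
      · have e1 := hJ (1 / 2) (1 / 2) (by norm_num) (by norm_num [abs_of_pos])
        have e2 := hJ (1 / 2) (t - 1 / 2) (by norm_num) (by rw [abs_of_nonneg] <;> linarith)
        have := abs_le.1 (half (1 - t) (by linarith) (by linarith))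
        norm_num at e1
        rw [h0, h1] at e1
        have r1 : 1 / 2 + (t - 1 / 2) = t := by ring
        have r2 : 1 / 2 - (t - 1 / 2) = 1 - t := by ring
        rw [r1, r2] at e2
        norm_num at e2
        rw [abs_le]
        constructor <;> linarith
  have pos : ∀ t, 0 ≤ t → t ≤ 1 → F t = t := by
    intro t ht0 ht1
    have hl : Filter.Tendsto (fun n : ℕ => 2 * (1 / 2 : ℝ) ^ n) Filter.atTop (nhds (2 * 0)) :=
      (tendsto_pow_atTop_nhds_zero_of_lt_one (by norm_num) (by norm_num)).const_mul 2
    have := ge_of_tendsto' hl (fun n => hD n t ht0 ht1)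
    rw [mul_zero] at this
    have := abs_eq_zero.1 (le_antisymm this (abs_nonneg _))
    linarith
  intro t ht
  have ht' := abs_le.1 ht
  rcases le_total 0 t with h | h
  · exact pos t h ht'.2
  · have e := hJ 0 t le_rfl (by linarith)
    have := pos (-t) (by linarith) (by linarith)
    rw [zero_add, zero_sub, h0, this] at e
    linarith

lemma q0_abs (x : SU2) : |q0 x| ≤ 1 := by
  rw [← sq_le_one_iff_abs_le_one]
  nlinarith [q_sq x, sq_nonneg (q1 x), sq_nonneg (q2 x), sq_nonneg (q3 x)]

lemma q0_dalembert (x y : SU2) : q0 (x * y) + q0 (x * y⁻¹) = 2 * q0 x * q0 y := by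
  rw [q0_mul, q0_mul, q0_inv, q1_inv, q2_inv, q3_inv]
  ring

lemma q0_mul_inv (x y : SU2) :
    q0 (x * y⁻¹) = q0 x * q0 y + q1 x * q1 y + q2 x * q2 y + q3 x * q3 y := by
  rw [q0_mul, q0_inv, q1_inv, q2_inv, q3_inv]
  ring

lemma q0_one_eq {x : SU2} (h : q0 x = 1) : x = 1 := by
  have hx := q_sq x
  rw [h] at hx
  apply su_ext
  · rw [h, q0_one]
  · rw [q1_one]; nlinarith [sq_nonneg (q1 x), sq_nonneg (q2 x), sq_nonneg (q3 x)]
  · rw [q2_one]; nlinarith [sq_nonneg (q1 x), sq_nonneg (q2 x), sq_nonneg (q3 x)]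
  · rw [q3_one]; nlinarith [sq_nonneg (q1 x), sq_nonneg (q2 x), sq_nonneg (q3 x)]

lemma q0_conj (n x : SU2) : q0 (n * x * n⁻¹) = q0 x := by
  simp only [q0_mul, q1_mul, q2_mul, q3_mul, q0_inv, q1_inv, q2_inv, q3_inv]
  linear_combination (q0 x) * q_sq n

lemma hom_dichotomy (g : SU2 →* SU2) : (∀ x, g x = 1) ∨ ∀ x, q0 (g x) = q0 x := by
  have hcl : ∀ x y, q0 x = q0 y → q0 (g x) = q0 (g y) := by
    intro x y h
    obtain ⟨n, rfl⟩ := su_conj h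
    rw [map_mul, map_mul, map_inv, q0_conj]
  have hex : ∀ t : ℝ, ∃ x : SU2, |t| ≤ 1 → q0 x = t := by
    intro t
    by_cases ht : |t| ≤ 1
    · have h2 : t ^ 2 ≤ 1 := (sq_le_one_iff_abs_le_one t).2 ht
      obtain ⟨x, hx, -⟩ := su_exists t (√(1 - t ^ 2)) 0 0 (by
        rw [Real.sq_sqrt (by linarith)]; ring)
      exact ⟨x, fun _ => hx⟩
    · exact ⟨1, fun h => absurd h ht⟩
  choose X hX using hex
  set F : ℝ → ℝ := fun t => q0 (g (X t)) with hF
  have hFx : ∀ x, q0 (g x) = F (q0 x) := fun x => hcl _ _ (hX _ (q0_abs x)).symm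
  have hF1 : F 1 = 1 := by
    have := hFx 1
    rw [map_one, q0_one] at this
    exact this.symm
  have hdal : ∀ x y, F (q0 (x * y)) + F (q0 (x * y⁻¹)) = 2 * F (q0 x) * F (q0 y) := by
    intro x y
    rw [← hFx, ← hFx, ← hFx, ← hFx, map_mul, map_mul, map_inv, q0_dalembert]
  have hmul : ∀ s t, |s| ≤ 1 → |t| ≤ 1 → F (s * t) = F s * F t := by
    intro s t hs ht
    have hs2 : s ^ 2 ≤ 1 := (sq_le_one_iff_abs_le_one s).2 hs
    have ht2 : t ^ 2 ≤ 1 := (sq_le_one_iff_abs_le_one t).2 ht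
    obtain ⟨x, x0, x1, x2, x3⟩ := su_exists s (√(1 - s ^ 2)) 0 0 (by
        rw [Real.sq_sqrt (by linarith)]; ring)
    obtain ⟨y, y0, y1, y2, y3⟩ := su_exists t 0 (√(1 - t ^ 2)) 0 (by
        rw [Real.sq_sqrt (by linarith)]; ring)
    have := hdal x y
    rw [q0_mul, q0_mul_inv, x0, x1, x2, x3, y0, y1, y2, y3] at this
    ring_nf at this
    linarith
  have h00 := hmul 0 0 (by simp) (by simp)
  rw [mul_zero] at h00
  rcases eq_or_ne (F 0) 0 with h0 | h0
  · right
    intro x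
    rw [hFx]
    refine jensen_lin F (fun t _ _ => q0_abs _) h0 hF1 ?_ _ (q0_abs x)
    intro p q hp hpq
    have hp1 : p ≤ 1 := by linarith [abs_nonneg q]
    have hq2 : q ^ 2 ≤ (1 - p) ^ 2 := sq_le_sq' (by linarith [neg_abs_le q]) (by linarith [le_abs_self q])
    have hsp : √p ^ 2 = p := Real.sq_sqrt hp
    have hsp' : √(1 - p) ^ 2 = 1 - p := Real.sq_sqrt (by linarith)
    have hsp1 : |√p| ≤ 1 := (sq_le_one_iff_abs_le_one _).1 (by rw [hsp]; exact hp1)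
    obtain ⟨w, hw1, hw2⟩ : ∃ w, √(1 - p) * w = q ∧ w ^ 2 ≤ 1 - p := by
      rcases hp1.eq_or_lt with h | h
      · refine ⟨0, ?_, by simp [h]⟩
        rw [h] at hq2
        nlinarith
      · have : 0 < √(1 - p) := Real.sqrt_pos.2 (by linarith)
        refine ⟨q / √(1 - p), by field_simp, ?_⟩
        rw [div_pow, hsp', div_le_iff₀ (by linarith)]
        linarith
    obtain ⟨x, x0, x1, x2, x3⟩ := su_exists (√p) (√(1 - p)) 0 0 (by
        rw [hsp, hsp']; ring)
    obtain ⟨y, y0, y1, y2, y3⟩ := su_exists (√p) w (√(1 - p - w ^ 2)) 0 (by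
        rw [hsp, Real.sq_sqrt (by linarith)]; ring)
    have e := hdal x y
    have hm := hmul (√p) (√p) hsp1 hsp1
    rw [q0_mul, q0_mul_inv, x0, x1, x2, x3, y0, y1, y2, y3, hw1] at e
    have hpp : √p * √p = p := by rw [← sq]; exact hsp
    rw [hpp] at e hm
    simp only [zero_mul, add_zero, sub_zero, mul_zero] at e
    linarith
  · left
    have h1 : F 0 = 1 := by
      have : F 0 * (F 0 - 1) = 0 := by linarith
      rcases mul_eq_zero.1 this with h | h
      · exact absurd h h0
      · linarith
    intro x
    apply q0_one_eq
    have := hmul 0 (q0 x) (by simp) (q0_abs x)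
    rw [zero_mul, h1, one_mul] at this
    rw [hFx, ← this]

lemma hom_fix (g : SU2 →* SU2) (hq : ∀ x, q0 (g x) = q0 x) (i j : SU2)
    (i0 : q0 i = 0) (i1 : q1 i = 1) (i2 : q2 i = 0) (i3 : q3 i = 0)
    (j0 : q0 j = 0) (j1 : q1 j = 0) (j2 : q2 j = 1) (j3 : q3 j = 0)
    (hi : g i = i) (hj : g j = j) (x : SU2) : g x = x := by
  have hy : ∀ y, g y = y → q0 (g x * y⁻¹) = q0 (x * y⁻¹) := by
    intro y h
    have := hq (x * y⁻¹)
    rwa [map_mul, map_inv, h] at this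
  have ek := hy (i * j) (by rw [map_mul, hi, hj])
  have ei := hy i hi
  have ej := hy j hj
  rw [q0_mul_inv, q0_mul_inv] at ek ei ej
  simp only [q0_mul, q1_mul, q2_mul, q3_mul, i0, i1, i2, i3, j0, j1, j2, j3] at ek ei ej
  apply su_ext
  · exact hq x
  · linarith
  · linarith
  · linarith

lemma hom_inner (g : SU2 →* SU2) (hq : ∀ x, q0 (g x) = q0 x) :
    ∃ n : SU2, ∀ x, g x = n * x * n⁻¹ := by
  obtain ⟨i, i0, i1, i2, i3⟩ := su_exists 0 1 0 0 (by norm_num)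
  obtain ⟨j, j0, j1, j2, j3⟩ := su_exists 0 0 1 0 (by norm_num)
  obtain ⟨m, hm⟩ := su_conj (hq i).symm
  set v := m⁻¹ * g j * m with hv
  have hv0 : q0 v = 0 := by
    have := q0_conj m⁻¹ (g j)
    rw [inv_inv, hq, j0] at this
    exact this
  have hv1 : q1 v = 0 := by
    have h1 : q0 (v * i⁻¹) = 0 := by
      have e : v * i⁻¹ = m⁻¹ * g (j * i⁻¹) * m⁻¹⁻¹ := by
        rw [map_mul, map_inv, hm, hv]; group
      rw [e, q0_conj, hq, q0_mul_inv, i0, i1, i2, i3, j0, j1, j2, j3]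
      ring
    rw [q0_mul_inv, i0, i1, i2, i3] at h1
    linarith
  have hvs := q_sq v
  rw [hv0, hv1] at hvs
  obtain ⟨n, hni, hnj⟩ : ∃ n : SU2, n * i = i * n ∧ n * j = v * n := by
    by_cases hp : 0 < (1 + q2 v) ^ 2 + (q3 v) ^ 2
    · obtain ⟨s, n, n0, n1, n2, n3⟩ := su_scaled (1 + q2 v) (- q3 v) 0 0 (by linarith)
      refine ⟨n, su_ext ?_ ?_ ?_ ?_, su_ext ?_ ?_ ?_ ?_⟩ <;>
        simp only [q0_mul, q1_mul, q2_mul, q3_mul, i0, i1, i2, i3, j0, j1, j2, j3, n0, n1, n2, n3, hv0, hv1]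
      all_goals first
        | ring1
        | linear_combination s * hvs
        | linear_combination -s * hvs
    · have a2 : q2 v = -1 := by nlinarith [sq_nonneg (1 + q2 v), sq_nonneg (q3 v)]
      have a3 : q3 v = 0 := by nlinarith [sq_nonneg (1 + q2 v), sq_nonneg (q3 v)]
      refine ⟨i, rfl, su_ext ?_ ?_ ?_ ?_⟩ <;>
        simp only [q0_mul, q1_mul, q2_mul, q3_mul, i0, i1, i2, i3, j0, j1, j2, j3, hv0, hv1, a2, a3] <;>
        ring
  let c : SU2 →* SU2 := (MulAut.conj (m * n)⁻¹).toMonoidHom.comp g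
  have hc : ∀ x, c x = (m * n)⁻¹ * g x * (m * n) := fun x => by
    simp [c, mul_assoc]
  refine ⟨m * n, fun x => ?_⟩
  have := hom_fix c (fun x => by
    rw [hc]
    have := q0_conj (m * n)⁻¹ (g x)
    rw [inv_inv, hq] at this
    exact this) i j i0 i1 i2 i3 j0 j1 j2 j3 (by
      rw [hc, hm]
      calc _ = n⁻¹ * (i * n) := by group
        _ = i := by rw [← hni]; group) (by
      rw [hc]
      calc _ = n⁻¹ * (v * n) := by rw [hv]; group
        _ = j := by rw [← hnj]; group) x
  rw [hc] at this
  calc g x = (m * n) * ((m * n)⁻¹ * g x * (m * n)) * (m * n)⁻¹ := by group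
    _ = _ := by rw [this]

lemma hom_cases (g : SU2 →* SU2) : (∀ x, g x = 1) ∨ ∃ n : SU2, ∀ x, g x = n * x * n⁻¹ :=
  (hom_dichotomy g).imp_right (hom_inner g)

lemma su_noncomm : ∃ x y : SU2, x * y ≠ y * x := by
  obtain ⟨i, i0, i1, i2, i3⟩ := su_exists 0 1 0 0 (by norm_num)
  obtain ⟨j, j0, j1, j2, j3⟩ := su_exists 0 0 1 0 (by norm_num)
  refine ⟨i, j, fun h => ?_⟩
  have := congrArg q3 h
  rw [q3_mul, q3_mul, i0, i1, i2, i3, j0, j1, j2, j3] at this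
  norm_num at this

/-- **The three conjugacy classes of splittings of
`1 → SU(2) → SU(2) × (SU(2) × SU(2)) → SU(2) × SU(2) → 1`.**
`τ`, `ω₊`, `ω₋` are splittings, they are pairwise non-conjugate, and every continuous
splitting is conjugate to one of them. -/
theorem su2_sequence_has_three_conjugacy_classes_of_splittings :
    (∀ q, suProj (suTau q) = q) ∧
    (∀ q, suProj (suOmegaPlus q) = q) ∧
    (∀ q, suProj (suOmegaMinus q) = q) ∧
    ¬ suConj suTau suOmegaPlus ∧ ¬ suConj suTau suOmegaMinus ∧
    ¬ suConj suOmegaPlus suOmegaMinus ∧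
    (∀ σ : (SU2 × SU2) →* (SU2 × SU2 × SU2), Continuous σ →
      (∀ q, suProj (σ q) = q) →
      suConj suTau σ ∨ suConj suOmegaPlus σ ∨ suConj suOmegaMinus σ) := by
  obtain ⟨a, b, hab⟩ := su_noncomm
  have ha : a ≠ 1 := by
    rintro rfl
    exact hab (by rw [one_mul, mul_one])
  refine ⟨fun _ => rfl, fun _ => rfl, fun _ => rfl, ?_, ?_, ?_, ?_⟩
  · rintro ⟨n, hn⟩
    have h : a = n * 1 * n⁻¹ := congrArg Prod.fst (hn (a, a))
    exact ha (by rw [h]; group)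
  · rintro ⟨n, hn⟩
    have h : a = n * 1 * n⁻¹ := congrArg Prod.fst (hn (a, a))
    exact ha (by rw [h]; group)
  · rintro ⟨n, hn⟩
    have h : a = n * 1 * n⁻¹ := congrArg Prod.fst (hn (1, a))
    exact ha (by rw [h]; group)
  · intro σ _ hσ
    let f : (SU2 × SU2) →* SU2 := (MonoidHom.fst SU2 (SU2 × SU2)).comp σ
    let g : SU2 →* SU2 := f.comp (MonoidHom.inl SU2 SU2)
    let h : SU2 →* SU2 := f.comp (MonoidHom.inr SU2 SU2)
    have hf1 : ∀ x y, f (x, y) = g x * h y := by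
      intro x y
      change f (x, y) = f (x, 1) * f (1, y)
      rw [← map_mul, Prod.mk_mul_mk, mul_one, one_mul]
    have hf2 : ∀ x y, f (x, y) = h y * g x := by
      intro x y
      change f (x, y) = f (1, y) * f (x, 1)
      rw [← map_mul, Prod.mk_mul_mk, mul_one, one_mul]
    have hσf : ∀ q, σ q = (f q, q) := fun q => Prod.ext rfl (hσ q)
    rcases hom_cases g with hg | ⟨n, hg⟩
    · rcases hom_cases h with hh | ⟨n, hh⟩
      · left
        refine ⟨1, fun q => ?_⟩
        rw [hσf, show q = (q.1, q.2) from rfl, hf1, hg, hh]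
        refine Prod.ext ?_ (Prod.ext ?_ ?_) <;> simp [suTau]
      · right; right
        refine ⟨n, fun q => ?_⟩
        rw [hσf, show q = (q.1, q.2) from rfl, hf1, hg, hh]
        refine Prod.ext ?_ (Prod.ext ?_ ?_) <;> simp [suOmegaMinus]
    · rcases hom_cases h with hh | ⟨m, hh⟩
      · right; left
        refine ⟨n, fun q => ?_⟩
        rw [hσf, show q = (q.1, q.2) from rfl, hf1, hg, hh]
        refine Prod.ext ?_ (Prod.ext ?_ ?_) <;> simp [suOmegaPlus]
      · exfalso
        apply hab
        have e := (hf1 (n⁻¹ * a * n) (m⁻¹ * b * m)).symm.trans (hf2 _ _)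
        rw [hg, hh] at e
        have e1 : n * (n⁻¹ * a * n) * n⁻¹ = a := by group
        have e2 : m * (m⁻¹ * b * m) * m⁻¹ = b := by group
        rwa [e1, e2] at e
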